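/- arXiv:2307.16079 — 6 statements merged into one kernel-verified Lean document; each statement's English description precedes it below -/
import Mathlib

section
/- Let μ ∈ ℝ. If f : ℝ → ℂ is differentiable, L-periodic, not identically zero, and satisfies −i f′(s) + V(s) f(s) = μ f(s) for all s ∈ ℝ, then there exists m ∈ ℤ such that μ = μ_m(V,L) = (2π/L)(m + Φ_V), and f(s) = f(0) · exp( i μ s − i ∫_0^s V(ς) dς ) for all s. Conversely, for every m ∈ ℤ the function f_{m,V} is L-periodic, differentiable, and satisfies −i f_{m,V}′ + V f_{m,V} = μ_m(V,L) f_{m,V}. -/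
open MeasureTheory

/-- The mean flux `Φ_V = (1/(2π)) ∫_0^L V`. -/
noncomputable def fluxV (L : ℝ) (V : ℝ → ℝ) : ℝ :=
  (1 / (2 * Real.pi)) * ∫ ς in (0:ℝ)..L, V ς

/-- The eigenvalues `μ_m(V,L) = (2π/L)(m + Φ_V)`. -/
noncomputable def muV (L : ℝ) (V : ℝ → ℝ) (m : ℤ) : ℝ :=
  (2 * Real.pi / L) * ((m : ℝ) + fluxV L V)

/-- The eigenfunctions `f_{m,V}(s) = L^{-1/2} exp(i μ_m(V,L) s - i ∫_0^s V)`. -/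
noncomputable def fmV (L : ℝ) (V : ℝ → ℝ) (m : ℤ) (s : ℝ) : ℂ :=
  ((Real.sqrt L)⁻¹ : ℂ) *
    Complex.exp (Complex.I * ((muV L V m * s - ∫ ς in (0:ℝ)..s, V ς : ℝ) : ℂ))

theorem aux_deriv (V : ℝ → ℝ) (hVc : Continuous V) (μ₀ s : ℝ) :
    HasDerivAt (fun s : ℝ => Complex.exp (Complex.I * ((μ₀ * s - ∫ ς in (0:ℝ)..s, V ς : ℝ) : ℂ)))
      (Complex.exp (Complex.I * ((μ₀ * s - ∫ ς in (0:ℝ)..s, V ς : ℝ) : ℂ)) *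
        (Complex.I * ((μ₀ - V s : ℝ) : ℂ))) s := by
  have h1 : HasDerivAt (fun s : ℝ => ∫ ς in (0:ℝ)..s, V ς) (V s) s :=
    intervalIntegral.integral_hasDerivAt_right (hVc.intervalIntegrable _ _)
      (hVc.stronglyMeasurableAtFilter _ _) hVc.continuousAt
  have h2 : HasDerivAt (fun s : ℝ => μ₀ * s) μ₀ s := by
    simpa using (hasDerivAt_id s).const_mul μ₀
  have h3 : HasDerivAt (fun s : ℝ => μ₀ * s - ∫ ς in (0:ℝ)..s, V ς) (μ₀ - V s) s := h2.sub h1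
  exact (h3.ofReal_comp.const_mul Complex.I).cexp

theorem aux_per (L : ℝ) (V : ℝ → ℝ) (hVc : Continuous V)
    (hVper : ∀ s, V (s + L) = V s) (s : ℝ) :
    (∫ ς in (0:ℝ)..(s + L), V ς) = (∫ ς in (0:ℝ)..s, V ς) + ∫ ς in (0:ℝ)..L, V ς := by
  have hp : Function.Periodic V L := hVper
  have h := hp.intervalIntegral_add_eq s 0
  rw [zero_add] at h
  rw [← h, intervalIntegral.integral_add_adjacent_intervals
    (hVc.intervalIntegrable _ _) (hVc.intervalIntegrable _ _)]

theorem aux_mu (L : ℝ) (hL : 0 < L) (V : ℝ → ℝ) (m : ℤ) :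
    muV L V m * L - (∫ ς in (0:ℝ)..L, V ς) = m * (2 * Real.pi) := by
  have := Real.pi_pos
  unfold muV fluxV
  field_simp
  ring

theorem stmt_0 (L : ℝ) (hL : 0 < L) (V : ℝ → ℝ) (hVc : Continuous V)
    (hVper : ∀ s, V (s + L) = V s) :
    (∀ (μ₀ : ℝ) (f : ℝ → ℂ), Differentiable ℝ f → (∀ s, f (s + L) = f s) →
      (∃ s, f s ≠ 0) →
      (∀ s, -Complex.I * deriv f s + (V s : ℂ) * f s = (μ₀ : ℂ) * f s) →
      ∃ m : ℤ, μ₀ = muV L V m ∧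
        ∀ s : ℝ, f s = f 0 *
          Complex.exp (Complex.I * ((μ₀ * s - ∫ ς in (0:ℝ)..s, V ς : ℝ) : ℂ))) ∧
    (∀ m : ℤ,
      (∀ s : ℝ, fmV L V m (s + L) = fmV L V m s) ∧
      Differentiable ℝ (fmV L V m) ∧
      (∀ s : ℝ, -Complex.I * deriv (fmV L V m) s + (V s : ℂ) * fmV L V m s
        = (muV L V m : ℂ) * fmV L V m s)) := by
  refine ⟨?_, ?_⟩
  · intro μ₀ f hf hper hne heq
    have hsol : ∀ s : ℝ, f s = f 0 *
          Complex.exp (Complex.I * ((μ₀ * s - ∫ ς in (0:ℝ)..s, V ς : ℝ) : ℂ)) := by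
      set E : ℝ → ℂ := fun s : ℝ =>
        Complex.exp (Complex.I * ((μ₀ * s - ∫ ς in (0:ℝ)..s, V ς : ℝ) : ℂ)) with hE
      have hEne : ∀ s, E s ≠ 0 := fun s => Complex.exp_ne_zero _
      have hE0 : E 0 = 1 := by simp [hE]
      have hd : ∀ s, HasDerivAt (fun s => f s / E s) 0 s := by
        intro s
        have hdE : HasDerivAt E (E s * (Complex.I * ((μ₀ - V s : ℝ) : ℂ))) s :=
          aux_deriv V hVc μ₀ s
        have h := (hf s).hasDerivAt.div hdE (hEne s)
        have hfd : deriv f s = Complex.I * ((μ₀ - V s : ℝ) : ℂ) * f s := by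
          push_cast
          linear_combination Complex.I * heq s + deriv f s * Complex.I_mul_I
        have hz : (deriv f s * E s - f s * (E s * (Complex.I * ((μ₀ - V s : ℝ) : ℂ)))) / E s ^ 2
            = 0 := by
          rw [hfd]
          ring
        rw [hz] at h
        exact h
      intro s
      have hc := is_const_of_deriv_eq_zero (fun s => (hd s).differentiableAt)
        (fun s => (hd s).deriv) s 0
      simp only [hE0, div_one] at hc
      rw [← hc]
      exact (div_mul_cancel₀ _ (hEne s)).symm
    have hf0 : f 0 ≠ 0 := by
      obtain ⟨s, hs⟩ := hne
      intro h0
      apply hs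
      rw [hsol s, h0, zero_mul]
    have hL1 : f L = f 0 := by simpa using hper 0
    rw [hsol L] at hL1
    have h1 := mul_left_cancel₀ hf0 (hL1.trans (mul_one _).symm)
    obtain ⟨n, hn⟩ := Complex.exp_eq_one_iff.1 h1
    refine ⟨n, ?_, hsol⟩
    have h2 : ((μ₀ * L - ∫ ς in (0:ℝ)..L, V ς : ℝ) : ℂ) = ((n * (2 * Real.pi) : ℝ) : ℂ) := by
      apply mul_left_cancel₀ Complex.I_ne_zero
      rw [hn]
      push_cast
      ring
    have h3 := Complex.ofReal_injective h2
    have h4 := aux_mu L hL V n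
    apply mul_right_cancel₀ hL.ne'
    linarith
  · intro m
    have hd : ∀ s, HasDerivAt (fmV L V m)
        (fmV L V m s * (Complex.I * ((muV L V m - V s : ℝ) : ℂ))) s := by
      intro s
      have h := (aux_deriv V hVc (muV L V m) s).const_mul ((Real.sqrt L)⁻¹ : ℂ)
      rw [← mul_assoc] at h
      exact h
    refine ⟨?_, fun s => (hd s).differentiableAt, ?_⟩
    · intro s
      unfold fmV
      congr 1
      rw [Complex.exp_eq_exp_iff_exists_int]
      refine ⟨m, ?_⟩
      have h : muV L V m * (s + L) - (∫ ς in (0:ℝ)..(s + L), V ς) =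
          (muV L V m * s - ∫ ς in (0:ℝ)..s, V ς) + m * (2 * Real.pi) := by
        rw [aux_per L V hVc hVper, ← aux_mu L hL V m]
        ring
      rw [h, Complex.ofReal_add]
      push_cast
      ring
    · intro s
      rw [(hd s).deriv]
      push_cast
      linear_combination (-(fmV L V m s) * ((muV L V m : ℂ) - V s)) * Complex.I_mul_I
end

section
/- The family { f_{m,V} restricted to [0,L) : m ∈ ℤ } is an orthonormal basis (Hilbert basis) of the complex Hilbert space L²((0,L); ℂ) with Lebesgue measure: the functions are pairwise orthogonal, each has L²-norm 1, and their closed linear span is all of L²((0,L); ℂ). -/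
open MeasureTheory

/-- The gauge factor. -/
noncomputable def gaugeV (L : ℝ) (V : ℝ → ℝ) (s : ℝ) : ℂ :=
  Complex.exp (((2 * Real.pi / L * fluxV L V * s - ∫ ς in (0:ℝ)..s, V ς : ℝ) : ℂ) * Complex.I)

lemma gaugeV_norm (L : ℝ) (V : ℝ → ℝ) (s : ℝ) : ‖gaugeV L V s‖ = 1 :=
  Complex.norm_exp_ofReal_mul_I _

lemma gaugeV_cont (L : ℝ) (V : ℝ → ℝ) (hV : Continuous V) : Continuous (gaugeV L V) := by
  have := intervalIntegral.continuous_primitive (μ := volume)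
    (fun a b => hV.intervalIntegrable a b) 0
  unfold gaugeV
  fun_prop

lemma fmV_eq (L : ℝ) (V : ℝ → ℝ) (m : ℤ) (s : ℝ) :
    fmV L V m s = ((Real.sqrt L)⁻¹ : ℂ) * (fourier m (s : AddCircle L) * gaugeV L V s) := by
  rw [fourier_coe_apply, gaugeV, fmV, ← Complex.exp_add, muV]
  congr 2
  push_cast
  ring

lemma fmV_cont (L : ℝ) (V : ℝ → ℝ) (hV : Continuous V) (m : ℤ) : Continuous (fmV L V m) := by
  have := intervalIntegral.continuous_primitive (μ := volume)
    (fun a b => hV.intervalIntegrable a b) 0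
  unfold fmV
  fun_prop

lemma fmV_memLp (L : ℝ) (V : ℝ → ℝ) (hV : Continuous V) (m : ℤ) :
    MemLp (fmV L V m) 2 (volume.restrict (Set.Ioo (0:ℝ) L)) := by
  refine MemLp.of_bound (fmV_cont L V hV m).aestronglyMeasurable (‖((Real.sqrt L)⁻¹ : ℂ)‖) ?_
  refine Filter.Eventually.of_forall fun s => ?_
  rw [fmV, norm_mul, mul_comm Complex.I, Complex.norm_exp_ofReal_mul_I, mul_one]

lemma inner_fmV (L : ℝ) (V : ℝ → ℝ) (m : ℤ) (s : ℝ) (z : ℂ) :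
    inner ℂ (fmV L V m s) z = ((Real.sqrt L)⁻¹ : ℂ) *
      (fourier (-m) (s : AddCircle L) * (starRingEnd ℂ (gaugeV L V s) * z)) := by
  rw [RCLike.inner_apply, fmV_eq, fourier_neg]
  simp only [map_mul, map_inv₀, Complex.conj_ofReal]
  ring

lemma integral_inner_fmV (L : ℝ) (hL : 0 < L) (V : ℝ → ℝ) (m : ℤ) (g : ℝ → ℂ) :
    ∫ s in Set.Ioo 0 L, inner ℂ (fmV L V m s) (g s) = ((Real.sqrt L)⁻¹ : ℂ) *
      ∫ s in (0:ℝ)..L, fourier (-m) (s : AddCircle L) * (starRingEnd ℂ (gaugeV L V s) * g s) := by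
  simp_rw [inner_fmV]
  rw [integral_const_mul, intervalIntegral.integral_of_le hL.le, integral_Ioc_eq_integral_Ioo]

/-- The family `{f_{m,V}|_{(0,L)} : m ∈ ℤ}` is an orthonormal (Hilbert) basis of
`L²((0,L); ℂ)`: orthonormal, and with dense linear span. -/
theorem stmt_1 (L : ℝ) (hL : 0 < L) (V : ℝ → ℝ) (hVc : Continuous V)
    (hVper : ∀ s, V (s + L) = V s) :
    ∃ F : ℤ → Lp ℂ 2 (volume.restrict (Set.Ioo (0:ℝ) L)),
      (∀ m : ℤ, (⇑(F m) : ℝ → ℂ) =ᵐ[volume.restrict (Set.Ioo (0:ℝ) L)] fmV L V m) ∧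
      Orthonormal ℂ F ∧
      (Submodule.span ℂ (Set.range F)).topologicalClosure = ⊤ := by
  have hF : ∀ m, (⇑((fmV_memLp L V hVc m).toLp) : ℝ → ℂ)
      =ᵐ[volume.restrict (Set.Ioo (0:ℝ) L)] fmV L V m := fun m => MemLp.coeFn_toLp _
  have hI : ∀ m (g : Lp ℂ 2 (volume.restrict (Set.Ioo (0:ℝ) L))),
      inner ℂ ((fmV_memLp L V hVc m).toLp) g =
        ∫ s in Set.Ioo 0 L, inner ℂ (fmV L V m s) (g s) := by
    intro m g
    rw [L2.inner_def]
    refine integral_congr_ae ?_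
    filter_upwards [hF m] with s hs
    rw [hs]
  have hsq : ((Real.sqrt L : ℝ) : ℂ) ≠ 0 := by
    exact_mod_cast (Real.sqrt_pos.2 hL).ne'
  have hG : ∀ s, starRingEnd ℂ (gaugeV L V s) * gaugeV L V s = 1 := by
    intro s
    rw [Complex.conj_mul', gaugeV_norm]; simp
  refine ⟨fun m => (fmV_memLp L V hVc m).toLp, hF, ?_, ?_⟩
  · rw [orthonormal_iff_ite]
    intro m n
    rw [hI]
    have h1 : ∫ s in Set.Ioo 0 L, inner ℂ (fmV L V m s) ((⇑((fmV_memLp L V hVc n).toLp) : ℝ → ℂ) s)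
        = ∫ s in Set.Ioo 0 L, inner ℂ (fmV L V m s) (fmV L V n s) := by
      refine integral_congr_ae ?_
      filter_upwards [hF n] with s hs
      rw [hs]
    rw [h1, integral_inner_fmV L hL]
    haveI : Fact (0 < L) := ⟨hL⟩
    have h2 := congrFun (fourierCoeff_fourier (T := L) n) m
    rw [fourierCoeff_eq_intervalIntegral _ _ 0, zero_add] at h2
    have h3 : ∀ s : ℝ, (fourier (-m) (s : AddCircle L) : ℂ) *
        (starRingEnd ℂ (gaugeV L V s) * fmV L V n s) =
        ((Real.sqrt L)⁻¹ : ℂ) * (fourier (-m) (s : AddCircle L) • fourier n (s : AddCircle L)) := by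
      intro s
      rw [fmV_eq, smul_eq_mul]
      linear_combination ((Real.sqrt L)⁻¹ : ℂ) * (fourier (-m) (s : AddCircle L)
        * fourier n (s : AddCircle L)) * hG s
    simp_rw [h3]
    rw [intervalIntegral.integral_const_mul, ← mul_assoc]
    have h4 : ((Real.sqrt L)⁻¹ : ℂ) * ((Real.sqrt L)⁻¹ : ℂ) = ((1 / L : ℝ) : ℂ) := by
      rw [← mul_inv, ← Complex.ofReal_mul, Real.mul_self_sqrt hL.le]; simp
    rw [h4, ← Complex.real_smul, h2, Pi.single_apply]
  · rw [Submodule.topologicalClosure_eq_top_iff, Submodule.eq_bot_iff]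
    intro g hg
    have h0 : ∀ m, ∫ s in (0:ℝ)..L, fourier (-m) (s : AddCircle L) *
        (starRingEnd ℂ (gaugeV L V s) * g s) = 0 := by
      intro m
      have := (Submodule.mem_orthogonal _ _).1 hg _ (Submodule.subset_span ⟨m, rfl⟩)
      simp only at this
      rw [hI, integral_inner_fmV L hL] at this
      exact (mul_eq_zero.1 this).resolve_left (inv_ne_zero hsq)
    have hnorm : ∀ s, ‖starRingEnd ℂ (gaugeV L V s) * g s‖ = ‖g s‖ := by
      intro s
      rw [norm_mul, RCLike.norm_conj, gaugeV_norm, one_mul]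
    have hmem : MemLp (fun s => starRingEnd ℂ (gaugeV L V s) * g s) 2
        (volume.restrict (Set.Ioc 0 L)) := by
      rw [← restrict_Ioo_eq_restrict_Ioc]
      refine (Lp.memLp g).of_le ?_ (Filter.Eventually.of_forall fun s => (hnorm s).le)
      exact (Complex.continuous_conj.comp (gaugeV_cont L V hVc)).aestronglyMeasurable.mul
        (Lp.aestronglyMeasurable g)
    have hP := tsum_sq_fourierCoeffOn hL hmem
    have hc : ∀ m, fourierCoeffOn hL (fun s => starRingEnd ℂ (gaugeV L V s) * g s) m = 0 := by
      intro m
      rw [fourierCoeffOn_eq_integral]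
      have := h0 m
      simp only [fourier_coe_apply, smul_eq_mul, sub_zero] at this ⊢
      rw [this, smul_zero]
    simp only [hc, hnorm, norm_zero, sub_zero, smul_eq_mul] at hP
    have hP2 : ∫ s in (0:ℝ)..L, ‖g s‖ ^ 2 = 0 := by
      have : L⁻¹ * ∫ s in (0:ℝ)..L, ‖g s‖ ^ 2 = 0 := by rw [← hP]; simp
      exact (mul_eq_zero.1 this).resolve_left (inv_ne_zero hL.ne')
    rw [intervalIntegral.integral_of_le hL.le, integral_Ioc_eq_integral_Ioo] at hP2
    rw [← inner_self_eq_zero (𝕜 := ℂ), L2.inner_def]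
    simp_rw [inner_self_eq_norm_sq_to_K]
    have h5 : ∀ s, ((‖g s‖ : ℂ)) ^ 2 = ((‖g s‖ ^ 2 : ℝ) : ℂ) := by intro s; push_cast; rfl
    simp only [Complex.coe_algebraMap, h5]
    rw [integral_complex_ofReal, hP2, Complex.ofReal_zero]
end

section
/- Let f : ℝ → ℂ be smooth and 2π-periodic, with Fourier coefficients f̂(n) = (1/(2π)) ∫_0^{2π} f(ζ) e^{−inζ} dζ for n ∈ ℤ. Then for every s ∈ ℝ the series ∑_{n ≥ 0} f̂(n) e^{ins} converges absolutely and lim_{r → 1⁻} (1/(2π)) ∫_0^{2π} f(ζ) / (1 − r e^{i(s−ζ)}) dζ = ∑_{n ≥ 0} f̂(n) e^{ins}. -/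
open MeasureTheory

lemma aux_parts (g g' : ℝ → ℂ) (hg : ∀ x, HasDerivAt g (g' x) x) (hc : Continuous g')
    (hper : g (2 * Real.pi) = g 0) (n : ℕ) :
    ∫ ζ in (0:ℝ)..(2 * Real.pi), g' ζ * Complex.exp (-Complex.I * (n : ℂ) * (ζ : ℂ)) =
    (Complex.I * n) * ∫ ζ in (0:ℝ)..(2 * Real.pi), g ζ * Complex.exp (-Complex.I * (n : ℂ) * (ζ : ℂ)) := by
  have hE : ∀ x : ℝ, HasDerivAt (fun ζ : ℝ => Complex.exp (-Complex.I * (n : ℂ) * (ζ : ℂ)))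
      (Complex.exp (-Complex.I * (n : ℂ) * (x : ℂ)) * (-Complex.I * (n : ℂ))) x := by
    intro x
    have h := ((Complex.ofRealCLM.hasDerivAt (x := x)).const_mul (-Complex.I * (n : ℂ))).cexp
    simpa using h
  have h := intervalIntegral.integral_deriv_mul_eq_sub
    (a := 0) (b := 2 * Real.pi) (u := g) (v := fun ζ : ℝ => Complex.exp (-Complex.I * (n : ℂ) * (ζ : ℂ)))
    (fun x _ => hg x) (fun x _ => hE x) (hc.intervalIntegrable _ _)
    (Continuous.intervalIntegrable (by fun_prop) _ _)
  have hgc : Continuous g := continuous_iff_continuousAt.2 fun x => (hg x).continuousAt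
  rw [intervalIntegral.integral_add (Continuous.intervalIntegrable (by fun_prop) _ _)
    (Continuous.intervalIntegrable (by fun_prop) _ _)] at h
  have h2 : Complex.exp (-Complex.I * (n : ℂ) * ((2 * Real.pi : ℝ) : ℂ)) = 1 := by
    rw [Complex.exp_eq_one_iff]
    exact ⟨-n, by push_cast; ring⟩
  rw [h2, hper] at h
  have h3 : ∫ x in (0:ℝ)..(2 * Real.pi), g x * (Complex.exp (-Complex.I * (n : ℂ) * (x : ℂ)) * (-Complex.I * (n : ℂ)))
      = (-(Complex.I * n)) * ∫ ζ in (0:ℝ)..(2 * Real.pi), g ζ * Complex.exp (-Complex.I * (n : ℂ) * (ζ : ℂ)) := by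
    rw [← intervalIntegral.integral_const_mul]
    congr 1; ext x; ring
  rw [h3] at h
  simp only [Complex.ofReal_zero, mul_zero, Complex.exp_zero, sub_self] at h
  linear_combination h

lemma aux_norm (n : ℕ) (x : ℝ) : ‖Complex.exp (Complex.I * (n : ℂ) * (x : ℂ))‖ = 1 := by
  rw [show Complex.I * (n : ℂ) * (x : ℂ) = ((n * x : ℝ) : ℂ) * Complex.I by push_cast; ring]
  exact Complex.norm_exp_ofReal_mul_I _

lemma aux_norm' (n : ℕ) (x : ℝ) : ‖Complex.exp (-Complex.I * (n : ℂ) * (x : ℂ))‖ = 1 := by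
  rw [show -Complex.I * (n : ℂ) * (x : ℂ) = ((-n * x : ℝ) : ℂ) * Complex.I by push_cast; ring]
  exact Complex.norm_exp_ofReal_mul_I _

set_option maxHeartbeats 400000 in
/-- Abel/Cauchy-integral representation of the Hardy-space projection on the circle:
for smooth `2π`-periodic `f`, the series `∑_{n ≥ 0} f̂(n) e^{ins}` converges absolutely
and equals the boundary limit of the Cauchy integral. -/
theorem stmt_4 (f : ℝ → ℂ) (hf : ContDiff ℝ (⊤ : ℕ∞) f)
    (hfper : ∀ x : ℝ, f (x + 2 * Real.pi) = f x)
    (fc : ℕ → ℂ)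
    (hfc : ∀ n : ℕ, fc n = ((1 / (2 * Real.pi) : ℝ) : ℂ) *
      ∫ ζ in (0:ℝ)..(2 * Real.pi), f ζ * Complex.exp (-Complex.I * (n : ℂ) * (ζ : ℂ))) :
    ∀ s : ℝ,
      Summable (fun n : ℕ => ‖fc n * Complex.exp (Complex.I * (n : ℂ) * (s : ℂ))‖) ∧
      Filter.Tendsto
        (fun r : ℝ => ((1 / (2 * Real.pi) : ℝ) : ℂ) *
          ∫ ζ in (0:ℝ)..(2 * Real.pi),
            f ζ / (1 - (r : ℂ) * Complex.exp (Complex.I * ((s - ζ : ℝ) : ℂ))))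
        (nhdsWithin (1 : ℝ) (Set.Iio 1))
        (nhds (∑' n : ℕ, fc n * Complex.exp (Complex.I * (n : ℂ) * (s : ℂ)))) := by
  intro s
  have hf2 : ContDiff ℝ 2 f := by exact_mod_cast contDiff_infty.1 hf 2
  have hd1 : ContDiff ℝ 1 (deriv f) := by
    have : ContDiff ℝ (1 + 1) f := by simpa [one_add_one_eq_two] using hf2
    exact (contDiff_succ_iff_deriv.1 this).2.2
  have hd2 : Continuous (deriv (deriv f)) := hd1.continuous_deriv le_rfl
  have hfc0 : Continuous f := hf.continuous
  have hper1 : deriv f (2 * Real.pi) = deriv f 0 := by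
    have h := deriv_comp_add_const f (2 * Real.pi) 0
    rw [show (fun x => f (x + 2 * Real.pi)) = f from funext hfper] at h
    simpa using h.symm
  have hper0 : f (2 * Real.pi) = f 0 := by simpa using hfper 0
  obtain ⟨C, hC⟩ := isCompact_Icc.exists_bound_of_continuousOn
    (s := Set.Icc (0:ℝ) (2 * Real.pi)) hd2.continuousOn
  have hpi := Real.two_pi_pos
  have hbd : ∀ n : ℕ, n ≠ 0 → ‖fc n‖ ≤ C * (1 / (n : ℝ) ^ 2) := by
    intro n hn
    have hn' : (0:ℝ) < n := by positivity
    have e1 := aux_parts f (deriv f)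
      (fun x => (hf2.differentiable (by norm_num) x).hasDerivAt) hd1.continuous hper0 n
    have e2 := aux_parts (deriv f) (deriv (deriv f))
      (fun x => (hd1.differentiable (by norm_num) x).hasDerivAt) hd2 hper1 n
    rw [e1] at e2
    have hI : ‖∫ ζ in (0:ℝ)..(2 * Real.pi), deriv (deriv f) ζ * Complex.exp (-Complex.I * (n : ℂ) * (ζ : ℂ))‖
        ≤ C * |2 * Real.pi - 0| := by
      apply intervalIntegral.norm_integral_le_of_norm_le_const
      intro x hx
      rw [Set.uIoc_of_le hpi.le] at hx
      rw [norm_mul, aux_norm', mul_one]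
      exact hC x ⟨hx.1.le, hx.2⟩
    rw [e2, sub_zero, abs_of_pos hpi] at hI
    rw [hfc n, norm_mul]
    simp only [norm_mul, Complex.norm_I, one_mul, Complex.norm_natCast] at hI
    rw [Complex.norm_real, Real.norm_of_nonneg (by positivity)]
    set J := ‖∫ ζ in (0:ℝ)..(2 * Real.pi), f ζ * Complex.exp (-Complex.I * (n : ℂ) * (ζ : ℂ))‖
    rw [mul_one_div, le_div_iff₀ (by positivity), one_div, mul_assoc, inv_mul_le_iff₀ hpi]
    nlinarith
  have hsum : Summable (fun n : ℕ => ‖fc n * Complex.exp (Complex.I * (n : ℂ) * (s : ℂ))‖) := by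
    simp only [norm_mul, aux_norm, mul_one]
    have hs : Summable (fun n : ℕ => C * (1 / (n : ℝ) ^ 2)) :=
      (Real.summable_one_div_nat_pow.2 (by norm_num)).mul_left C
    refine Summable.of_norm_bounded_eventually_nat hs ?_
    filter_upwards [Filter.eventually_ne_atTop 0] with n hn
    simpa using hbd n hn
  refine ⟨hsum, ?_⟩
  have key : ∀ r : ℝ, 0 ≤ r → r < 1 → ∑' n : ℕ, fc n * Complex.exp (Complex.I * (n : ℂ) * (s : ℂ)) * (r:ℂ) ^ n
      = ((1 / (2 * Real.pi) : ℝ) : ℂ) * ∫ ζ in (0:ℝ)..(2 * Real.pi),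
            f ζ / (1 - (r : ℂ) * Complex.exp (Complex.I * ((s - ζ : ℝ) : ℂ))) := by
    intro r hr0 hr1
    obtain ⟨D, hD⟩ := isCompact_Icc.exists_bound_of_continuousOn
      (s := Set.Icc (0:ℝ) (2 * Real.pi)) hfc0.continuousOn
    have hz : ∀ t : ℝ, ‖(r : ℂ) * Complex.exp (Complex.I * (t : ℂ))‖ = r := by
      intro t
      have := aux_norm 1 t
      simp only [Nat.cast_one, mul_one] at this
      rw [norm_mul, this, mul_one, Complex.norm_real, Real.norm_of_nonneg hr0]
    have hm : ∀ n : ℕ, Continuous (fun ζ : ℝ =>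
        f ζ * ((r : ℂ) * Complex.exp (Complex.I * ((s - ζ : ℝ) : ℂ))) ^ n) := by
      intro n; fun_prop
    have hb : ∀ n : ℕ, ∀ᵐ ζ : ℝ, ζ ∈ Set.uIoc (0:ℝ) (2 * Real.pi) →
        ‖f ζ * ((r : ℂ) * Complex.exp (Complex.I * ((s - ζ : ℝ) : ℂ))) ^ n‖ ≤ D * r ^ n := by
      intro n
      refine Filter.Eventually.of_forall fun ζ hζ => ?_
      rw [Set.uIoc_of_le hpi.le] at hζ
      rw [norm_mul, norm_pow, hz]
      exact mul_le_mul_of_nonneg_right (hD ζ ⟨hζ.1.le, hζ.2⟩) (pow_nonneg hr0 n)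
    have hl : ∀ᵐ ζ : ℝ, ζ ∈ Set.uIoc (0:ℝ) (2 * Real.pi) → HasSum (fun n : ℕ =>
        f ζ * ((r : ℂ) * Complex.exp (Complex.I * ((s - ζ : ℝ) : ℂ))) ^ n)
        (f ζ / (1 - (r : ℂ) * Complex.exp (Complex.I * ((s - ζ : ℝ) : ℂ)))) := by
      refine Filter.Eventually.of_forall fun ζ _ => ?_
      rw [div_eq_mul_inv]
      have hlt : ‖(r : ℂ) * Complex.exp (Complex.I * ((s - ζ : ℝ) : ℂ))‖ < 1 := by
        rw [hz]; exact hr1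
      have hg := hasSum_geometric_of_norm_lt_one hlt
      exact hg.mul_left (f ζ)
    have hgs : Summable (fun n : ℕ => D * r ^ n) :=
      (summable_geometric_of_lt_one hr0 hr1).mul_left D
    have H := intervalIntegral.hasSum_integral_of_dominated_convergence
      (fun (n : ℕ) (_ : ℝ) => D * r ^ n)
      (fun n => (hm n).aestronglyMeasurable) hb
      (Filter.Eventually.of_forall fun ζ _ => hgs)
      intervalIntegrable_const hl
    rw [← (H.mul_left ((1 / (2 * Real.pi) : ℝ) : ℂ)).tsum_eq]
    congr 1; ext n
    rw [hfc n, mul_assoc, mul_assoc, ← intervalIntegral.integral_mul_const]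
    congr 2; ext ζ
    rw [mul_pow, ← Complex.exp_nat_mul, mul_assoc, ← mul_assoc (Complex.exp _), ← Complex.exp_add,
      mul_comm ((r:ℂ)^n)]
    congr 3
    push_cast; ring
  have hmem : ∀ᶠ r : ℝ in nhdsWithin (1 : ℝ) (Set.Iio 1), 0 ≤ r ∧ r < 1 := by
    filter_upwards [self_mem_nhdsWithin, mem_nhdsWithin_of_mem_nhds (Ici_mem_nhds (zero_lt_one))]
      with r h1 h2 using ⟨h2, h1⟩
  have T : Filter.Tendsto (fun r : ℝ => ∑' n : ℕ, fc n * Complex.exp (Complex.I * (n : ℂ) * (s : ℂ)) * (r:ℂ) ^ n)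
      (nhdsWithin (1 : ℝ) (Set.Iio 1))
        (nhds (∑' n : ℕ, fc n * Complex.exp (Complex.I * (n : ℂ) * (s : ℂ)))) := by
    refine tendsto_tsum_of_dominated_convergence hsum ?_ ?_
    · intro n
      have : Continuous (fun r : ℝ => fc n * Complex.exp (Complex.I * (n : ℂ) * (s : ℂ)) * (r:ℂ) ^ n) := by
        fun_prop
      have h := this.tendsto 1
      simp only [Complex.ofReal_one, one_pow, mul_one] at h
      exact h.mono_left nhdsWithin_le_nhds
    · filter_upwards [hmem] with r hr n
      rw [norm_mul, norm_pow, Complex.norm_real, Real.norm_of_nonneg hr.1]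
      exact mul_le_of_le_one_right (norm_nonneg _) (pow_le_one₀ hr.1 hr.2.le)
  refine T.congr' ?_
  filter_upwards [hmem] with r hr using key r hr.1 hr.2
end

section
/- Let R > 0 and let B : [0,R] → ℝ be continuous, nonnegative and nonincreasing. Define a(r) = (1/r) ∫_0^r B(ρ) ρ dρ for r ∈ (0,R]. Then for every integer m < 0 and every r ∈ (0,R]: ( m/r − a(r) )² − B(r) ≥ (2/r²) ∫_0^r ( B(ρ) − B(r) ) ρ dρ ≥ 0. -/
open MeasureTheory

/-- Pointwise lower bound for the effective radial potential at negative
angular momentum `m < 0`: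
`(m/r - a(r))² - B(r) ≥ (2/r²)∫_0^r (B(ρ) - B(r))ρ dρ ≥ 0`. -/
theorem stmt_9 (R : ℝ) (hR : 0 < R) (B : ℝ → ℝ)
    (hBc : ContinuousOn B (Set.Icc 0 R))
    (hBnn : ∀ r ∈ Set.Icc (0:ℝ) R, 0 ≤ B r)
    (hBmono : ∀ r₁ ∈ Set.Icc (0:ℝ) R, ∀ r₂ ∈ Set.Icc (0:ℝ) R, r₁ ≤ r₂ → B r₂ ≤ B r₁)
    (a : ℝ → ℝ) (ha : ∀ r ∈ Set.Ioc (0:ℝ) R, a r = (1 / r) * ∫ ρ in (0:ℝ)..r, B ρ * ρ)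
    (m : ℤ) (hm : m < 0) (r : ℝ) (hr : r ∈ Set.Ioc (0:ℝ) R) :
    ((m : ℝ) / r - a r) ^ 2 - B r ≥ (2 / r ^ 2) * (∫ ρ in (0:ℝ)..r, (B ρ - B r) * ρ) ∧
    (2 / r ^ 2) * (∫ ρ in (0:ℝ)..r, (B ρ - B r) * ρ) ≥ 0 := by
  obtain ⟨hr0, hrR⟩ := hr
  have hsub : Set.Icc (0:ℝ) r ⊆ Set.Icc 0 R := Set.Icc_subset_Icc_right hrR
  have hint : IntervalIntegrable (fun ρ => B ρ * ρ) volume 0 r := by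
    apply ContinuousOn.intervalIntegrable
    rw [Set.uIcc_of_le hr0.le]
    exact (hBc.mono hsub).mul continuousOn_id
  have hint2 : IntervalIntegrable (fun ρ : ℝ => B r * ρ) volume 0 r :=
    (by fun_prop : Continuous fun ρ : ℝ => B r * ρ).intervalIntegrable _ _
  have hI : 0 ≤ ∫ ρ in (0:ℝ)..r, B ρ * ρ :=
    intervalIntegral.integral_nonneg hr0.le
      fun x hx => mul_nonneg (hBnn x (hsub hx)) hx.1
  have hJ : 0 ≤ ∫ ρ in (0:ℝ)..r, (B ρ - B r) * ρ :=
    intervalIntegral.integral_nonneg hr0.le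
      fun x hx => mul_nonneg
        (sub_nonneg.2 (hBmono x (hsub hx) r ⟨hr0.le, hrR⟩ hx.2)) hx.1
  have hJe : (∫ ρ in (0:ℝ)..r, (B ρ - B r) * ρ)
      = (∫ ρ in (0:ℝ)..r, B ρ * ρ) - B r * (r ^ 2 / 2) := by
    simp only [sub_mul]
    rw [intervalIntegral.integral_sub hint hint2, intervalIntegral.integral_const_mul,
      integral_id]
    ring
  refine ⟨?_, mul_nonneg (by positivity) hJ⟩
  rw [hJe, ha r ⟨hr0, hrR⟩]
  generalize (∫ ρ in (0:ℝ)..r, B ρ * ρ) = I at hI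
  have hm1 : (m : ℝ) ≤ -1 := by exact_mod_cast (by omega : m ≤ -1)
  have key : 0 ≤ ((m : ℝ) - I) ^ 2 - 2 * I := by nlinarith [sq_nonneg (m : ℝ), sq_nonneg I]
  have e : ((m : ℝ) / r - 1 / r * I) ^ 2 - B r - 2 / r ^ 2 * (I - B r * (r ^ 2 / 2))
      = (((m : ℝ) - I) ^ 2 - 2 * I) / r ^ 2 := by
    field_simp
    ring
  have := div_nonneg key (sq_nonneg r)
  linarith
end

section
/- Let σ : ℝ → ℝ be a continuous function with e^{iσ(t)} = (i − t)/(i + t) for all t ∈ ℝ, and let p : ℝ → ℂ be C¹ and 2π-periodic. Define Ψ(t) = p(σ(t)). Then Ψ is C¹, the function t ↦ conj(Ψ(t)) · (−i Ψ′(t)) is integrable on ℝ, and ∫_ℝ conj(Ψ(t)) (−i Ψ′(t)) dt = ∫_0^{2π} conj(p(s)) (−i p′(s)) ds. -/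
open MeasureTheory

lemma exp_arctan_aux (t : ℝ) : Complex.exp (Complex.I * ((2 * Real.arctan t : ℝ) : ℂ))
      = (Complex.I - (t : ℂ)) / (Complex.I + (t : ℂ)) := by
  have hne : Complex.I + (t : ℂ) ≠ 0 := by
    intro h
    have := congrArg Complex.im h
    simp at this
  have hc := Real.cos_sq_arctan t
  have hc0 : Real.cos (Real.arctan t) ≠ 0 := (Real.cos_arctan_pos t).ne'
  have hs : Real.sin (Real.arctan t) = t * Real.cos (Real.arctan t) := by
    have h := Real.tan_arctan t
    rw [Real.tan_eq_sin_div_cos, div_eq_iff hc0] at h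
    exact h
  have hpos : (1 + t ^ 2) ≠ 0 := by positivity
  have hc' : Real.cos (Real.arctan t) ^ 2 * (1 + t ^ 2) = 1 := by
    rw [hc]; field_simp
  rw [eq_div_iff hne, mul_comm Complex.I, Complex.exp_mul_I, ← Complex.ofReal_cos,
    ← Complex.ofReal_sin, Real.cos_two_mul, Real.sin_two_mul, hs]
  generalize Real.cos (Real.arctan t) = c at *
  apply Complex.ext
  · simp [pow_two]
    linear_combination (2 * t) * 0
  · simp [pow_two]
    linear_combination 2 * hc'

/-- Conformal invariance of the first-order (Dirac) kinetic form under the Cayley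
transform: with `Ψ = p ∘ σ` where `e^{iσ(t)} = (i-t)/(i+t)`, the function `Ψ` is `C¹`,
`conj Ψ · (-iΨ′)` is integrable on `ℝ`, and its integral equals
`∫_0^{2π} conj(p) (-i p′)`. -/
theorem stmt_16 (σ : ℝ → ℝ) (hσc : Continuous σ)
    (hσ : ∀ t : ℝ, Complex.exp (Complex.I * (σ t : ℂ))
      = (Complex.I - (t : ℂ)) / (Complex.I + (t : ℂ)))
    (p : ℝ → ℂ) (hp : ContDiff ℝ 1 p) (hpper : ∀ s, p (s + 2 * Real.pi) = p s) :
    ContDiff ℝ 1 (fun t : ℝ => p (σ t)) ∧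
    Integrable (fun t : ℝ =>
      (starRingEnd ℂ) (p (σ t)) * (-Complex.I * deriv (fun t' : ℝ => p (σ t')) t)) ∧
    (∫ t : ℝ, (starRingEnd ℂ) (p (σ t)) * (-Complex.I * deriv (fun t' : ℝ => p (σ t')) t))
      = ∫ s in (0:ℝ)..(2 * Real.pi), (starRingEnd ℂ) (p s) * (-Complex.I * deriv p s) := by
  have hper : Function.Periodic p (2 * Real.pi) := hpper
  have hEq : (fun t : ℝ => p (σ t)) = fun t : ℝ => p (2 * Real.arctan t) := by
    funext t
    have h := (hσ t).trans (exp_arctan_aux t).symm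
    rw [Complex.exp_eq_exp_iff_exists_int] at h
    obtain ⟨n, hn⟩ := h
    have h2 : σ t = 2 * Real.arctan t + n * (2 * Real.pi) := by
      have h3 : Complex.I * (σ t : ℂ)
          = Complex.I * ((2 * Real.arctan t + n * (2 * Real.pi) : ℝ) : ℂ) := by
        rw [hn]; push_cast; ring
      exact_mod_cast mul_left_cancel₀ Complex.I_ne_zero h3
    show p (σ t) = _
    rw [h2]
    exact hper.int_mul n _
  have hpt : ∀ t, p (σ t) = p (2 * Real.arctan t) := fun t => congrFun hEq t
  have hcd : ContDiff ℝ 1 (fun t : ℝ => 2 * Real.arctan t) :=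
    contDiff_const.mul Real.contDiff_arctan
  have hd : ∀ t : ℝ, HasDerivAt (fun t : ℝ => 2 * Real.arctan t) (2 * (1 / (1 + t ^ 2))) t :=
    fun t => (Real.hasDerivAt_arctan t).const_mul 2
  have hdp : ∀ t : ℝ, deriv (fun t : ℝ => p (2 * Real.arctan t)) t
      = (2 * (1 / (1 + t ^ 2)) : ℝ) • deriv p (2 * Real.arctan t) := fun t =>
    (((hp.differentiable one_ne_zero) (2 * Real.arctan t)).hasDerivAt.scomp t (hd t)).deriv
  set g : ℝ → ℂ := fun s => (starRingEnd ℂ) (p s) * (-Complex.I * deriv p s) with hg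
  have hgc : Continuous g := by
    have h1 : Continuous p := hp.continuous
    have h2 : Continuous (deriv p) := hp.continuous_deriv le_rfl
    exact (Complex.continuous_conj.comp h1).mul (continuous_const.mul h2)
  have hdper : Function.Periodic (deriv p) (2 * Real.pi) := by
    intro s
    rw [← deriv_comp_add_const]
    congr 1
    funext x
    exact hpper x
  have hgper : Function.Periodic g (2 * Real.pi) := by
    intro s
    simp only [hg, hper s, hdper s]
  have hinteg : (fun t : ℝ =>
      (starRingEnd ℂ) (p (σ t)) * (-Complex.I * deriv (fun t' : ℝ => p (σ t')) t))
      = fun t => |2 * (1 / (1 + t ^ 2))| • g (2 * Real.arctan t) := by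
    funext t
    rw [hEq, hdp, hpt, abs_of_pos (by positivity)]
    simp only [hg, Complex.real_smul]
    ring
  have hinj : Set.InjOn (fun t : ℝ => 2 * Real.arctan t) Set.univ := by
    intro a _ b _ h
    exact Real.arctan_injective (mul_left_cancel₀ two_ne_zero h)
  have himg : (fun t : ℝ => 2 * Real.arctan t) '' Set.univ = Set.Ioo (-Real.pi) Real.pi := by
    ext x
    simp only [Set.mem_image, Set.mem_univ, true_and, Set.mem_Ioo]
    constructor
    · rintro ⟨t, rfl⟩
      have := Real.arctan_lt_pi_div_two t
      have := Real.neg_pi_div_two_lt_arctan t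
      constructor <;> linarith
    · rintro ⟨h1, h2⟩
      refine ⟨Real.tan (x / 2), ?_⟩
      rw [Real.arctan_tan (by linarith) (by linarith)]
      ring
  have hI : IntegrableOn g (Set.Ioo (-Real.pi) Real.pi) :=
    (hgc.continuousOn.integrableOn_Icc (a := -Real.pi) (b := Real.pi)).mono_set Set.Ioo_subset_Icc_self
  refine ⟨?_, ?_, ?_⟩
  · rw [hEq]
    exact hp.comp hcd
  · rw [hinteg, ← integrableOn_univ]
    rw [← himg] at hI
    exact (integrableOn_image_iff_integrableOn_abs_deriv_smul MeasurableSet.univ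
      (fun t _ => (hd t).hasDerivWithinAt) hinj g).1 hI
  · rw [hinteg, ← setIntegral_univ, ← integral_image_eq_integral_abs_deriv_smul MeasurableSet.univ
      (fun t _ => (hd t).hasDerivWithinAt) hinj g, himg, ← integral_Ioc_eq_integral_Ioo,
      ← intervalIntegral.integral_of_le (by linarith [Real.pi_pos])]
    have := hgper.intervalIntegral_add_eq (-Real.pi) 0
    rw [show -Real.pi + 2 * Real.pi = Real.pi by ring, zero_add] at this
    exact this
end

section
/- Let V : ℝ → ℝ be continuous and 2π-periodic, set Φ_V = (1/(2π)) ∫_0^{2π} V(s) ds, and assume Φ_V < 0; let N = ⌈−Φ_V⌉. Then there exists an N-dimensional complex subspace M of the space of analytic trigonometric polynomials (finite sums f(s) = ∑_{n=0}^{K} a_n e^{ins} with a_n ∈ ℂ) such that every nonzero f ∈ M satisfies Re ∫_0^{2π} ( −i f′(s) + V(s) f(s) ) · conj(f(s)) ds < 0. -/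
open MeasureTheory

/-- spectral subspace -/
lemma spec_sub {E : Type*} [NormedAddCommGroup E] [InnerProductSpace ℂ E] [FiniteDimensional ℂ E]
    {T : E →ₗ[ℂ] E} (hT : T.IsSymmetric) {m : ℕ} (hn : Module.finrank ℂ E = m) (c : ℝ) (k : Fin m)
    (hk : hT.eigenvalues hn k < c) :
    ∃ W : Submodule ℂ E, Module.finrank ℂ W = m - k ∧
      ∀ x ∈ W, x ≠ 0 → (inner ℂ x (T x)).re < c * ‖x‖ ^ 2 := by
  set b := hT.eigenvectorBasis hn with hb
  refine ⟨Submodule.span ℂ (Set.range fun i : {i : Fin m // k ≤ i} => b i), ?_, ?_⟩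
  · rw [finrank_span_eq_card]
    · rw [Fintype.card_subtype]
      have : (Finset.univ.filter fun i : Fin m => k ≤ i) = Finset.Ici k := by ext; simp
      rw [this, Fin.card_Ici]
    · exact b.orthonormal.linearIndependent.comp _ Subtype.val_injective
  · intro x hx hx0
    have h0 : ∀ i, ¬ k ≤ i → b.repr x i = 0 := by
      intro i hi
      clear hx0
      induction hx using Submodule.span_induction with
      | mem y hy =>
        obtain ⟨l, rfl⟩ := hy
        have : (l : Fin m) ≠ i := fun h => hi (h ▸ l.2)
        simp [b.repr_self, this.symm]
      | zero => simp
      | add y z _ _ h1 h2 => simp [h1, h2]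
      | smul a y _ h1 => simp [h1]
    have e1 : (inner ℂ x (T x)).re = ∑ i, hT.eigenvalues hn i * ‖b.repr x i‖ ^ 2 := by
      rw [← b.repr.inner_map_map, PiLp.inner_apply, Complex.re_sum]
      refine Finset.sum_congr rfl fun i _ => ?_
      rw [hT.eigenvectorBasis_apply_self_apply hn, ← hb, RCLike.inner_apply, mul_assoc,
        RCLike.mul_conj]
      norm_cast
    have e2 : ‖x‖ ^ 2 = ∑ i, ‖b.repr x i‖ ^ 2 := by
      rw [← b.repr.norm_map x, EuclideanSpace.norm_sq_eq]
    rw [e1, e2, Finset.mul_sum]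
    have hx' : ∃ i, b.repr x i ≠ 0 := by
      by_contra! h
      exact hx0 (b.repr.map_eq_zero_iff.1 (by ext i; simpa using h i))
    obtain ⟨i, hi⟩ := hx'
    refine Finset.sum_lt_sum (fun i _ => ?_) ⟨i, Finset.mem_univ _, ?_⟩
    · by_cases hki : k ≤ i
      · have := hT.eigenvalues_antitone hn hki
        gcongr; linarith
      · simp [h0 i hki]
    · have hki : k ≤ i := by by_contra h; exact hi (h0 i h)
      have := hT.eigenvalues_antitone hn hki
      have : 0 < ‖b.repr x i‖ := norm_pos_iff.2 hi
      gcongr; linarith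

lemma exists_sub_finrank {E : Type*} [AddCommGroup E] [Module ℂ E] [FiniteDimensional ℂ E]
    (W : Submodule ℂ E) (N : ℕ) (h : N ≤ Module.finrank ℂ W) :
    ∃ W' ≤ W, Module.finrank ℂ W' = N := by
  let b := Module.finBasis ℂ W
  refine ⟨Submodule.span ℂ (Set.range fun i : Fin N => (b (Fin.castLE h i) : E)), ?_, ?_⟩
  · rw [Submodule.span_le]
    rintro _ ⟨i, rfl⟩
    exact (b _).2
  · rw [finrank_span_eq_card]
    · simp
    · exact (b.linearIndependent.map' W.subtype (by simp)).comp _ (Fin.castLE_injective h)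

/-- truncated matrix -/
def tz (v : ℤ → ℂ) (m : ℕ) : Matrix (Fin m) (Fin m) ℂ :=
  fun j k => (if j = k then ((k : ℕ) : ℂ) else 0) + v ((k : ℕ) - (j : ℕ))

lemma tz_herm (v : ℤ → ℂ) (hv : ∀ n, (starRingEnd ℂ) (v n) = v (-n)) (m : ℕ) :
    (Matrix.toEuclideanLin (tz v m)).IsSymmetric := by
  rw [Matrix.isSymmetric_toEuclideanLin_iff]
  ext j k
  simp only [tz, Matrix.conjTranspose_apply, star_add]
  congr 1
  · by_cases h : j = k
    · subst h; simp
    · simp [h, Ne.symm h]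
  · have := hv ((j : ℕ) - (k : ℕ))
    simpa using this

lemma tz_inner (v : ℤ → ℂ) (m : ℕ) (x : EuclideanSpace ℂ (Fin m)) :
    inner ℂ x (Matrix.toEuclideanLin (tz v m) x)
      = ∑ j, ∑ k, (starRingEnd ℂ) (x j) * x k * tz v m j k := by
  rw [PiLp.inner_apply]
  refine Finset.sum_congr rfl fun j _ => ?_
  rw [RCLike.inner_apply, Matrix.toLpLin_apply]
  simp only [Matrix.mulVec, dotProduct]
  rw [Finset.sum_mul]
  refine Finset.sum_congr rfl fun k _ => ?_
  ring

lemma tz_trace (v : ℤ → ℂ) (m : ℕ) :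
    (LinearMap.trace ℂ _ (Matrix.toEuclideanLin (tz v m))) = ∑ k : Fin m, (((k : ℕ) : ℂ) + v 0) := by
  have := Matrix.trace_toLin_eq (tz v m) (PiLp.basisFun 2 ℂ (Fin m))
  refine Eq.trans ?_ (this.trans ?_)
  · rfl
  · simp [Matrix.trace, tz]

/-- shift -/
def shf (j m : ℕ) : EuclideanSpace ℂ (Fin m) →ₗ[ℂ] EuclideanSpace ℂ (Fin (j + m)) where
  toFun x := WithLp.toLp 2 (Fin.append (0 : Fin j → ℂ) (fun i => x i))
  map_add' x y := by
    ext i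
    refine Fin.addCases (fun i => ?_) (fun i => ?_) i <;> simp
  map_smul' c x := by
    ext i
    refine Fin.addCases (fun i => ?_) (fun i => ?_) i <;> simp

lemma shf_left (j m : ℕ) (x : EuclideanSpace ℂ (Fin m)) (i : Fin j) :
    shf j m x (Fin.castAdd m i) = 0 := by simp [shf]

lemma shf_right (j m : ℕ) (x : EuclideanSpace ℂ (Fin m)) (i : Fin m) :
    shf j m x (Fin.natAdd j i) = x i := by simp [shf]

lemma shf_inj (j m : ℕ) : Function.Injective (shf j m) := by
  intro x y h
  ext i
  rw [← shf_right j m x, h, shf_right]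

lemma shf_norm (j m : ℕ) (x : EuclideanSpace ℂ (Fin m)) : ‖shf j m x‖ ^ 2 = ‖x‖ ^ 2 := by
  rw [EuclideanSpace.norm_sq_eq, EuclideanSpace.norm_sq_eq, Fin.sum_univ_add]
  simp [shf_left, shf_right]

lemma shf_form (v : ℤ → ℂ) (j m : ℕ) (x : EuclideanSpace ℂ (Fin m)) :
    (inner ℂ (shf j m x) (Matrix.toEuclideanLin (tz v (j + m)) (shf j m x))).re
      = (inner ℂ x (Matrix.toEuclideanLin (tz v m) x)).re + j * ‖x‖ ^ 2 := by
  rw [tz_inner, tz_inner, Fin.sum_univ_add]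
  simp only [Fin.sum_univ_add, shf_left, shf_right]
  simp only [map_zero, zero_mul, Finset.sum_const_zero, add_zero, mul_zero, zero_add]
  have h : ∀ a b : Fin m, tz v (j + m) (Fin.natAdd j a) (Fin.natAdd j b)
      = tz v m a b + if a = b then (j : ℂ) else 0 := by
    intro a b
    by_cases hab : a = b
    · subst hab; simp [tz]; ring
    · simp [tz, hab]
  simp only [h, mul_add, Finset.sum_add_distrib, Complex.add_re]
  congr 1
  simp only [mul_ite, mul_zero, Finset.sum_ite_eq, Finset.mem_univ, if_true, Complex.re_sum]
  rw [EuclideanSpace.norm_sq_eq, Finset.mul_sum]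
  refine Finset.sum_congr rfl fun i _ => ?_
  rw [Complex.conj_mul']
  norm_cast
  ring

lemma comap_finrank (j m N : ℕ) (W : Submodule ℂ (EuclideanSpace ℂ (Fin (j + m))))
    (h : N + j ≤ Module.finrank ℂ W) : N ≤ Module.finrank ℂ (W.comap (shf j m)) := by
  have h1 := Submodule.finrank_sup_add_finrank_inf_eq W (LinearMap.range (shf j m))
  have h2 := Submodule.finrank_le (W ⊔ LinearMap.range (shf j m))
  rw [finrank_euclideanSpace_fin] at h2
  have h3 := LinearMap.finrank_range_of_inj (shf_inj j m)
  rw [finrank_euclideanSpace_fin] at h3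
  have h4 : Module.finrank ℂ ((W.comap (shf j m)).map (shf j m)) ≤ _ := Submodule.finrank_map_le _ _
  rw [Submodule.map_comap_eq, inf_comm] at h4
  omega

theorem toeplitz_main (v : ℤ → ℂ) (hv : ∀ n, (starRingEnd ℂ) (v n) = v (-n)) (C : ℝ)
    (hC : ∀ m, ∀ x : EuclideanSpace ℂ (Fin m),
      -C * ‖x‖ ^ 2 ≤ (inner ℂ x (Matrix.toEuclideanLin (tz v m) x)).re)
    (n : ℕ) (hn : (v 0).re < -(n : ℝ)) :
    ∃ m, ∃ W : Submodule ℂ (EuclideanSpace ℂ (Fin m)), Module.finrank ℂ W = n + 1 ∧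
      ∀ x ∈ W, x ≠ 0 → (inner ℂ x (Matrix.toEuclideanLin (tz v m) x)).re < 0 := by
  by_contra! hcon
  have key : ∀ m, ∀ k : Fin m, n ≤ (k : ℕ) → (k : ℝ) - n ≤
      (tz_herm v hv m).eigenvalues finrank_euclideanSpace_fin k.rev := by
    intro m k hk
    by_contra! hlt
    obtain ⟨W, hW, hneg⟩ := spec_sub _ _ _ _ hlt
    obtain ⟨j, hj⟩ := Nat.exists_eq_add_of_le hk
    obtain ⟨m', rfl⟩ := Nat.exists_eq_add_of_le (show j ≤ m by have := k.2; omega)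
    have hk2 := k.2
    obtain ⟨W', hW', hd⟩ := exists_sub_finrank _ (n + 1) (comap_finrank j m' (n + 1) W (by
      rw [hW, Fin.val_rev]; omega))
    obtain ⟨x, hx, hx0, hge⟩ := hcon m' W' hd
    have h1 := hneg (shf j m' x) (hW' hx) (by
      intro h; exact hx0 (shf_inj j m' (by simpa using h)))
    rw [shf_form, shf_norm, hj] at h1
    push_cast at h1
    have : ((n : ℝ) + j - n) = j := by ring
    rw [this] at h1
    linarith
  have low : ∀ m, ∀ k : Fin m, -C ≤
      (tz_herm v hv m).eigenvalues finrank_euclideanSpace_fin k := by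
    intro m k
    have h := hC m ((tz_herm v hv m).eigenvectorBasis finrank_euclideanSpace_fin k)
    rw [LinearMap.IsSymmetric.apply_eigenvectorBasis, inner_smul_right,
      inner_self_eq_norm_sq_to_K, OrthonormalBasis.norm_eq_one] at h
    simpa using h
  have tr : ∀ m : ℕ, ∑ k : Fin m,
      (tz_herm v hv m).eigenvalues finrank_euclideanSpace_fin k.rev
        = ∑ k : Fin m, (((k : ℕ) : ℝ) + (v 0).re) := by
    intro m
    have h := (tz_herm v hv m).re_trace_eq_sum_eigenvalues finrank_euclideanSpace_fin
    rw [tz_trace] at h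
    exact (Equiv.sum_comp Fin.revPerm _).trans (h.symm.trans (by simp))
  have bd : ∀ m : ℕ, n ≤ m → -(n * C) - m * n ≤ m * (v 0).re := by
    intro m hm
    have h1 : ∑ k : Fin m, (((k : ℕ) : ℝ) - n - if (k : ℕ) < n then C else 0) ≤
        ∑ k : Fin m, (((k : ℕ) : ℝ) + (v 0).re) := by
      rw [← tr]
      refine Finset.sum_le_sum fun k _ => ?_
      split_ifs with hk
      · have := low m k.rev
        have : ((k : ℕ) : ℝ) < n := by exact_mod_cast hk
        linarith
      · have := key m k (by omega)
        linarith
    have h2 : ∑ k : Fin m, (if (k : ℕ) < n then C else 0) = n * C := by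
      rw [Fin.sum_univ_eq_sum_range (fun k => if k < n then C else 0), ← Finset.sum_filter]
      have : (Finset.range m).filter (fun k => k < n) = Finset.range n := by
        ext a; simp; omega
      rw [this]; simp
    rw [Finset.sum_sub_distrib, Finset.sum_sub_distrib, h2, Finset.sum_add_distrib] at h1
    simp at h1
    linarith
  obtain ⟨M, hM⟩ := exists_nat_gt ((n * C) / (-(n : ℝ) - (v 0).re))
  have hpos : 0 < -(n : ℝ) - (v 0).re := by linarith
  rw [div_lt_iff₀ hpos] at hM
  have h := bd (M + n) (by omega)
  push_cast at h
  have : 0 ≤ (n : ℝ) * (-(n : ℝ) - (v 0).re) := by positivity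
  nlinarith

/-- exponential -/
noncomputable def ex (n : ℤ) (s : ℝ) : ℂ := Complex.exp (Complex.I * (n : ℂ) * (s : ℂ))

lemma ex_cont (n : ℤ) : Continuous (ex n) := by unfold ex; fun_prop

lemma ex_conj (n : ℤ) (s : ℝ) : (starRingEnd ℂ) (ex n s) = ex (-n) s := by
  simp [ex, ← Complex.exp_conj]

lemma ex_mul (n k : ℤ) (s : ℝ) : ex n s * ex k s = ex (n + k) s := by
  simp only [ex, ← Complex.exp_add]
  congr 1; push_cast; ring

lemma ex_int (n : ℤ) : ∫ s in (0:ℝ)..(2 * Real.pi), ex n s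
    = if n = 0 then ((2 * Real.pi : ℝ) : ℂ) else 0 := by
  split_ifs with h
  · subst h; simp [ex]
  · unfold ex
    rw [integral_exp_mul_complex (by simp [h])]
    have : Complex.I * (n : ℂ) * ((2 * Real.pi : ℝ) : ℂ) = n * (2 * Real.pi * Complex.I) := by
      push_cast; ring
    rw [this, Complex.exp_int_mul_two_pi_mul_I]
    simp

/-- Fourier coefficient -/
noncomputable def vh (V : ℝ → ℝ) (n : ℤ) : ℂ :=
  ((2 * Real.pi : ℝ) : ℂ)⁻¹ * ∫ s in (0:ℝ)..(2 * Real.pi), (V s : ℂ) * ex n s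

lemma vh_conj (V : ℝ → ℝ) (n : ℤ) : (starRingEnd ℂ) (vh V n) = vh V (-n) := by
  unfold vh
  rw [map_mul, map_inv₀, Complex.conj_ofReal]
  congr 1
  rw [intervalIntegral.integral_of_le (by positivity), intervalIntegral.integral_of_le (by positivity),
    ← integral_conj]
  simp [ex_conj]

lemma vh_zero (V : ℝ → ℝ) :
    vh V 0 = ((1 / (2 * Real.pi) * ∫ s in (0:ℝ)..(2 * Real.pi), V s : ℝ) : ℂ) := by
  simp only [vh, ex]
  simp [intervalIntegral.integral_ofReal]

/-- synthesis map -/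
noncomputable def Fm (m : ℕ) : EuclideanSpace ℂ (Fin m) →ₗ[ℂ] (ℝ → ℂ) where
  toFun x := fun s => ∑ k : Fin m, x k * ex (k : ℕ) s
  map_add' x y := by ext s; simp [add_mul, Finset.sum_add_distrib]
  map_smul' c x := by ext s; simp [Finset.mul_sum, mul_assoc]

lemma Fm_apply (m : ℕ) (x : EuclideanSpace ℂ (Fin m)) (s : ℝ) :
    Fm m x s = ∑ k : Fin m, x k * ex (k : ℕ) s := rfl

lemma ex_deriv (n : ℤ) (s : ℝ) : HasDerivAt (ex n) (Complex.I * n * ex n s) s := by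
  unfold ex
  have h : HasDerivAt (fun s : ℝ => Complex.I * (n : ℂ) * (s : ℂ)) (Complex.I * n) s := by
    simpa using (Complex.ofRealCLM.hasDerivAt (x := s)).const_mul (Complex.I * (n : ℂ))
  rw [mul_comm (Complex.I * (n : ℂ)) (Complex.exp _)]
  exact h.cexp

lemma Fm_deriv (m : ℕ) (x : EuclideanSpace ℂ (Fin m)) (s : ℝ) :
    -Complex.I * deriv (Fm m x) s = ∑ k : Fin m, x k * ((k : ℕ) : ℂ) * ex (k : ℕ) s := by
  have : HasDerivAt (Fm m x) (∑ k : Fin m, x k * (Complex.I * ((k : ℕ) : ℤ) * ex (k : ℕ) s)) s := by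
    have := HasDerivAt.fun_sum (u := Finset.univ) (fun (k : Fin m) _ =>
      (ex_deriv ((k : ℕ) : ℤ) s).const_mul (x k))
    exact this
  rw [this.deriv, Finset.mul_sum]
  refine Finset.sum_congr rfl fun k _ => ?_
  have := Complex.I_mul_I
  push_cast
  linear_combination (-(x k) * (k : ℕ) * ex (k : ℕ) s) * this

lemma form_int (m : ℕ) (x : EuclideanSpace ℂ (Fin m)) (g : Fin m → ℝ → ℂ)
    (hg : ∀ k, Continuous (g k)) :
    ∫ s in (0:ℝ)..(2 * Real.pi),
      (∑ k : Fin m, x k * g k s * ex (k : ℕ) s) * (starRingEnd ℂ) (Fm m x s)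
    = ∑ j : Fin m, ∑ k : Fin m, (starRingEnd ℂ) (x j) * x k *
        ∫ s in (0:ℝ)..(2 * Real.pi), g k s * ex ((k : ℕ) - (j : ℕ)) s := by
  have h : ∀ s, (∑ k : Fin m, x k * g k s * ex (k : ℕ) s) * (starRingEnd ℂ) (Fm m x s)
      = ∑ j : Fin m, ∑ k : Fin m, (starRingEnd ℂ) (x j) * x k *
        (g k s * ex ((k : ℕ) - (j : ℕ)) s) := by
    intro s
    rw [Fm_apply, map_sum, Finset.sum_mul_sum, Finset.sum_comm]
    refine Finset.sum_congr rfl fun j _ => Finset.sum_congr rfl fun k _ => ?_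
    rw [map_mul, ex_conj, sub_eq_add_neg, ← ex_mul]
    ring
  have hc : ∀ j k : Fin m, Continuous fun s => (starRingEnd ℂ) (x j) * x k *
        (g k s * ex ((k : ℕ) - (j : ℕ)) s) := fun j k =>
    continuous_const.mul ((hg k).mul (ex_cont _))
  simp only [h]
  rw [intervalIntegral.integral_finsetSum]
  · refine Finset.sum_congr rfl fun j _ => ?_
    rw [intervalIntegral.integral_finsetSum]
    · simp only [intervalIntegral.integral_const_mul]
    · exact fun k _ => (hc j k).intervalIntegrable _ _
  · exact fun j _ => (continuous_finsetSum _ fun k _ => hc j k).intervalIntegrable _ _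

lemma int_coef (V : ℝ → ℝ) (hV : Continuous V) (c : ℝ) (n : ℤ) :
    ∫ s in (0:ℝ)..(2 * Real.pi), ((c : ℂ) + V s) * ex n s
      = ((2 * Real.pi : ℝ) : ℂ) * ((if n = 0 then (c : ℂ) else 0) + vh V n) := by
  have h2 : ((2 * Real.pi : ℝ) : ℂ) ≠ 0 := by
    exact_mod_cast (by positivity : (2 * Real.pi : ℝ) ≠ 0)
  simp only [add_mul]
  rw [intervalIntegral.integral_add, intervalIntegral.integral_const_mul, ex_int, vh, mul_add,
    mul_inv_cancel_left₀ h2]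
  · split_ifs <;> ring
  · exact (continuous_const.mul (ex_cont n)).intervalIntegrable _ _
  · exact ((Complex.continuous_ofReal.comp hV).mul (ex_cont n)).intervalIntegrable _ _

lemma form_eq (V : ℝ → ℝ) (hV : Continuous V) (m : ℕ) (x : EuclideanSpace ℂ (Fin m)) :
    ∫ s in (0:ℝ)..(2 * Real.pi),
      ((-Complex.I * deriv (Fm m x) s + (V s : ℂ) * Fm m x s) * (starRingEnd ℂ) (Fm m x s))
    = ((2 * Real.pi : ℝ) : ℂ) * inner ℂ x (Matrix.toEuclideanLin (tz (vh V) m) x) := by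
  have h := form_int m x (fun k s => (((k : ℕ) : ℝ) : ℂ) + V s) (fun k => by fun_prop)
  rw [tz_inner]
  refine Eq.trans ?_ (h.trans ?_)
  · congr 1
    ext s
    rw [Fm_deriv]
    congr 1
    rw [Fm_apply, Finset.mul_sum, ← Finset.sum_add_distrib]
    refine Finset.sum_congr rfl fun k _ => ?_
    push_cast; ring
  · rw [Finset.mul_sum]
    refine Finset.sum_congr rfl fun j _ => ?_
    rw [Finset.mul_sum]
    refine Finset.sum_congr rfl fun k _ => ?_
    rw [int_coef V hV, tz]
    have : (((k : ℕ) : ℤ) - ((j : ℕ) : ℤ) = 0) ↔ j = k := by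
      rw [Fin.ext_iff]; omega
    simp only [this]
    push_cast; ring

lemma form_low (V : ℝ → ℝ) (hV : Continuous V) (C : ℝ)
    (hC : ∀ s ∈ Set.Icc 0 (2 * Real.pi), -C ≤ V s) (m : ℕ) (x : EuclideanSpace ℂ (Fin m)) :
    -C * ‖x‖ ^ 2 ≤ (inner ℂ x (Matrix.toEuclideanLin (tz (vh V) m) x)).re := by
  have h := form_int m x (fun _ s => (C : ℂ) + V s) (fun k => by fun_prop)
  have hl : ∫ s in (0:ℝ)..(2 * Real.pi), (∑ k : Fin m, x k * ((C : ℂ) + V s) * ex (k : ℕ) s) *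
      (starRingEnd ℂ) (Fm m x s)
      = ((∫ s in (0:ℝ)..(2 * Real.pi), (C + V s) * ‖Fm m x s‖ ^ 2 : ℝ) : ℂ) := by
    rw [← intervalIntegral.integral_ofReal]
    congr 1
    ext s
    have : (∑ k : Fin m, x k * ((C : ℂ) + V s) * ex (k : ℕ) s) = ((C : ℂ) + V s) * Fm m x s := by
      rw [Fm_apply, Finset.mul_sum]
      refine Finset.sum_congr rfl fun k _ => ?_
      ring
    rw [this, mul_assoc, Complex.mul_conj']
    push_cast; ring
  have hnn : 0 ≤ ∫ s in (0:ℝ)..(2 * Real.pi), (C + V s) * ‖Fm m x s‖ ^ 2 := by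
    apply intervalIntegral.integral_nonneg (by positivity)
    intro s hs
    have := hC s hs
    exact mul_nonneg (by linarith) (by positivity)
  rw [hl] at h
  simp only [int_coef V hV] at h
  have hp : (0:ℝ) < 2 * Real.pi := by positivity
  have hr : ∑ j : Fin m, ∑ k : Fin m, (starRingEnd ℂ) (x j) * x k *
      (((2 * Real.pi : ℝ) : ℂ) * ((if ((k : ℕ) : ℤ) - ((j : ℕ) : ℤ) = 0 then (C : ℂ) else 0)
        + vh V ((k : ℕ) - (j : ℕ))))
      = ((2 * Real.pi : ℝ) : ℂ) * (inner ℂ x (Matrix.toEuclideanLin (tz (vh V) m) x)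
        + ((C * ‖x‖ ^ 2 - ∑ k : Fin m, (k : ℕ) * ‖x k‖ ^ 2 : ℝ) : ℂ)) := by
    have e : ((C * ‖x‖ ^ 2 - ∑ k : Fin m, (k : ℕ) * ‖x k‖ ^ 2 : ℝ) : ℂ)
        = ∑ j : Fin m, ∑ k : Fin m, (starRingEnd ℂ) (x j) * x k *
          (if j = k then (C : ℂ) - ((k : ℕ) : ℂ) else 0) := by
      simp only [mul_ite, mul_zero, Finset.sum_ite_eq, Finset.mem_univ, if_true]
      rw [EuclideanSpace.norm_sq_eq, Finset.mul_sum, ← Finset.sum_sub_distrib]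
      push_cast
      refine Finset.sum_congr rfl fun k _ => ?_
      rw [Complex.conj_mul']
      ring
    rw [e, tz_inner, ← Finset.sum_add_distrib, Finset.mul_sum]
    refine Finset.sum_congr rfl fun j _ => ?_
    rw [← Finset.sum_add_distrib, Finset.mul_sum]
    refine Finset.sum_congr rfl fun k _ => ?_
    have : (((k : ℕ) : ℤ) - ((j : ℕ) : ℤ) = 0) ↔ j = k := by
      rw [Fin.ext_iff]; omega
    simp only [this, tz]
    split_ifs <;> ring
  rw [hr] at h
  have h' := congrArg Complex.re h
  rw [Complex.ofReal_re, Complex.re_ofReal_mul, Complex.add_re, Complex.ofReal_re] at h'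
  rw [h'] at hnn
  have h3 := nonneg_of_mul_nonneg_right hnn hp
  have h4 : 0 ≤ ∑ k : Fin m, ((k : ℕ) : ℝ) * ‖x k‖ ^ 2 :=
    Finset.sum_nonneg fun k _ => by positivity
  linarith

/-- Variational lower bound for the Hardy-space compression of the twisted Dirac
operator on the circle: if `Φ_V < 0`, there is a subspace of analytic trigonometric
polynomials of dimension `⌈-Φ_V⌉` on which the quadratic form of `-i d/ds + V`
is negative definite. -/
theorem stmt_17 (V : ℝ → ℝ) (hVc : Continuous V)
    (hVper : ∀ s, V (s + 2 * Real.pi) = V s)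
    (hΦ : (1 / (2 * Real.pi)) * ∫ s in (0:ℝ)..(2 * Real.pi), V s < 0) :
    ∃ M : Submodule ℂ (ℝ → ℂ),
      (Module.finrank ℂ M : ℤ)
        = ⌈-((1 / (2 * Real.pi)) * ∫ s in (0:ℝ)..(2 * Real.pi), V s)⌉ ∧
      (∀ f ∈ M, ∃ (K : ℕ) (a : ℕ → ℂ), ∀ s : ℝ,
        f s = ∑ n ∈ Finset.range (K + 1),
          a n * Complex.exp (Complex.I * (n : ℂ) * (s : ℂ))) ∧
      (∀ f ∈ M, f ≠ (0 : ℝ → ℂ) →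
        (∫ s in (0:ℝ)..(2 * Real.pi),
          ((-Complex.I * deriv f s + (V s : ℂ) * f s) * (starRingEnd ℂ) (f s))).re < 0) := by
  set Φ := (1 / (2 * Real.pi)) * ∫ s in (0:ℝ)..(2 * Real.pi), V s with hΦd
  obtain ⟨C, hC⟩ : ∃ C : ℝ, ∀ s ∈ Set.Icc 0 (2 * Real.pi), -C ≤ V s := by
    obtain ⟨c, hc⟩ := (isCompact_Icc (a := (0:ℝ)) (b := 2 * Real.pi)).bddBelow_image hVc.continuousOn
    exact ⟨-c, fun s hs => by simpa using hc ⟨s, hs, rfl⟩⟩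
  have hceil : 0 < ⌈-Φ⌉ := Int.ceil_pos.2 (by linarith)
  obtain ⟨n, hn⟩ : ∃ n : ℕ, ⌈-Φ⌉ = n + 1 := ⟨(⌈-Φ⌉ - 1).toNat, by omega⟩
  have hlt : Φ < -(n : ℝ) := by
    have h := Int.ceil_lt_add_one (-Φ)
    rw [hn] at h
    push_cast at h
    linarith
  obtain ⟨m, W, hW, hneg⟩ := toeplitz_main (vh V) (vh_conj V) C (form_low V hVc C hC) n
    (by rw [vh_zero, Complex.ofReal_re]; exact hlt)
  have hp : (0:ℝ) < 2 * Real.pi := by positivity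
  have hQ : ∀ x ∈ W, x ≠ 0 → (∫ s in (0:ℝ)..(2 * Real.pi),
      ((-Complex.I * deriv (Fm m x) s + (V s : ℂ) * Fm m x s)
        * (starRingEnd ℂ) (Fm m x s))).re < 0 := by
    intro x hx hx0
    rw [form_eq V hVc, Complex.re_ofReal_mul]
    exact mul_neg_of_pos_of_neg hp (hneg x hx hx0)
  refine ⟨W.map (Fm m), ?_, ?_, ?_⟩
  · have hinj : Function.Injective ((Fm m).domRestrict W) := by
      rw [injective_iff_map_eq_zero]
      rintro ⟨x, hx⟩ h
      by_contra hx0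
      have h1 := hQ x hx (fun h => hx0 (by simp [h]))
      rw [LinearMap.domRestrict_apply] at h
      simp only at h
      rw [h] at h1
      simp at h1
    have h := LinearMap.finrank_range_of_inj hinj
    rw [LinearMap.range_domRestrict] at h
    rw [h, hW, hn]
    push_cast; ring
  · rintro _ ⟨x, -, rfl⟩
    refine ⟨m, fun k => if h : k < m then x ⟨k, h⟩ else 0, fun s => ?_⟩
    rw [Finset.sum_range_succ, Finset.sum_range, Fm_apply]
    simp [ex]
  · rintro _ ⟨x, hx, rfl⟩ hf
    exact hQ x hx (by rintro rfl; exact hf (map_zero _))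
end
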